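/- Let n_l, n_w, n_e ≥ 1. For u ∈ {l,w,e}, let {σ_i^u}_{i=0}^{n_u²−1} be a real-orthonormal basis of Hermitian n_u×n_u matrices with σ_0^u = (1/√n_u)·1 and tr(σ_i^u σ_j^u) = δ_{ij}. Let H be a Hermitian matrix on ℂ^{n_l}⊗ℂ^{n_w}⊗ℂ^{n_e} with coefficients g_{ijk} = tr( (σ_i^l⊗σ_j^w⊗σ_k^e) H ), and suppose that g_{ijk} = 0 whenever i ≥ 1 and k ≥ 1 (no direct logical–environment and no three-body interaction terms). Let L_1^e,…,L_M^e be arbitrary n_e×n_e matrices and let 𝓛 be the Lindblad generator with Hamiltonian H and noise operators L_m = 1⊗1⊗L_m^e. Then for every product state ρ_0 = ρ_l⊗ρ_w⊗ρ_e of density matrices, 2·tr( tr_{we}(𝓛(𝓛(ρ_0)))·tr_{we}(ρ_0) + (tr_{we}(𝓛(ρ_0)))² ) = −(4/n_e) Σ_{a,b,i,j ≥ 1} g_{ab0} g_{ij0} · tr( σ_a^l σ_i^l ρ_l² − σ_a^l ρ_l σ_i^l ρ_l ) · ( tr(σ_b^w σ_j^w ρ_w) − tr(σ_b^w ρ_w)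 tr(σ_j^w ρ_w) ). -/

import Mathlib

/-!
The Hamiltonian is expanded in the product basis and split as `H = H₁ + H₀`. Here
`H₁ = Σ_{a ≥ 1} σ_a ⊗ B_a ⊗ 1`, with `B_a = n_e^{-1/2} Σ_b g_{ab0} σ_b`, contains every term that acts
on the logical factor (by hypothesis these act trivially on the environment), and `H₀` collects the
terms with logical index `0`, so `H₀` commutes with every `A ⊗ 1 ⊗ 1`, as do the noise operators.
Accordingly `𝓛 = 𝓛₀ − i[H₁, ·]`, where `𝓛₀` is the Lindblad generator with Hamiltonian `H₀`.

All partial traces are evaluated through the duality `tr(tr_we(Y) A) = tr(Y (A ⊗ 1 ⊗ 1))`. If `P`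
commutes with the Hamiltonian and with the noise operators and their adjoints, then
`tr(𝓛₀(Y) P) = 0` for every `Y` (`trace_lindblad_mul_eq_zero`), and `𝓛₀(Y)` commutes with `P`
whenever `Y` does (`lindblad_commute`). With `P = ρ_l ⊗ 1 ⊗ 1`, which commutes with `ρ₀`, this kills
the outer `𝓛₀` in `tr(tr_we(𝓛(𝓛(ρ₀))) ρ_l)`, and also the mixed term, because
`tr([H₁, Z] P) = 0` when `Z = 𝓛₀(ρ₀)` commutes with `P`. What remains is

* `tr(tr_we(𝓛(𝓛(ρ₀))) ρ_l) = −tr([H₁, [H₁, ρ₀]] P)`, which is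
  `−2 Σ_{a,i} T_{ai} tr(B_a B_i ρ_w)` (`trace_double_commutator`), and
* `tr(tr_we(𝓛(ρ₀))²) = 2 Σ_{a,i} T_{ai} tr(B_a ρ_w) tr(B_i ρ_w)` (`trace_commutator_sq`),

where `T_{ai} = tr(σ_a σ_i ρ_l² − σ_a ρ_l σ_i ρ_l)`. Together they give the covariance of `B_a` and
`B_i` in the state `ρ_w`. A scalar matrix has zero covariance with anything, so in the expansion of
the `B_a` only wall indices `≥ 1` contribute (`covariance_expand`).
-/

open Matrix Kronecker
open scoped ComplexOrder

/-- Partial trace over the wall and environment factors. -/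
noncomputable def trWE {nl nw ne : ℕ}
    (ρ : Matrix ((Fin nl × Fin nw) × Fin ne) ((Fin nl × Fin nw) × Fin ne) ℂ) :
    Matrix (Fin nl) (Fin nl) ℂ :=
  fun a a' => ∑ b : Fin nw, ∑ c : Fin ne, ρ ((a, b), c) ((a', b), c)

/-- A density matrix: positive semidefinite with unit trace. -/
def IsDensity {m : Type*} [Fintype m] [DecidableEq m] (ρ : Matrix m m ℂ) : Prop :=
  ρ.PosSemidef ∧ ρ.trace = 1

/-- The Lindblad generator `𝓛(X) = −i[H,X] + Σ_m (L_m X L_m† − ½{L_m†L_m, X})`. -/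
noncomputable def lindblad {ι : Type*} [Fintype ι] {M : ℕ} (H : Matrix ι ι ℂ)
    (L : Fin M → Matrix ι ι ℂ) (X : Matrix ι ι ℂ) : Matrix ι ι ℂ :=
  (-Complex.I) • (H * X - X * H) +
    ∑ m : Fin M, (L m * X * (L m)ᴴ -
      (1 / 2 : ℂ) • ((L m)ᴴ * (L m) * X + X * ((L m)ᴴ * (L m))))

/-! ### Trace pairings and Kronecker products -/

/-- A family of `n²` matrices orthonormal for `(A, B) ↦ tr(A B)` is linearly independent, hence
spans all `n × n` matrices by dimension count, and the coefficients are recovered by the trace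
pairing. -/
theorem expand_of_orthonormal {ι m : Type*} [Fintype ι] [DecidableEq ι] [Fintype m]
    [DecidableEq m] (hc : Fintype.card ι = Fintype.card m * Fintype.card m)
    (s : ι → Matrix m m ℂ) (hs : ∀ i j, (s i * s j).trace = if i = j then 1 else 0)
    (X : Matrix m m ℂ) : X = ∑ i, (s i * X).trace • s i := by
  have hcoef : ∀ (c : ι → ℂ) (j : ι), (s j * ∑ i, c i • s i).trace = c j := by
    intro c j
    simp [Finset.mul_sum, Matrix.trace_sum, hs]
  have hli : LinearIndependent ℂ s := by
    rw [Fintype.linearIndependent_iff]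
    intro c h0 j
    rw [← hcoef c j, h0]
    simp
  have hspan : Submodule.span ℂ (Set.range s) = ⊤ := by
    apply hli.span_eq_top_of_card_eq_finrank'
    rw [hc, Module.finrank_matrix, Module.finrank_self, mul_one]
  have hX : X ∈ Submodule.span ℂ (Set.range s) := by rw [hspan]; trivial
  obtain ⟨c, rfl⟩ := (Submodule.mem_span_range_iff_exists_fun ℂ).1 hX
  exact Finset.sum_congr rfl fun j _ => by rw [hcoef]

/-- The partial trace is adjoint to `A ↦ A ⊗ 1 ⊗ 1` for the trace pairing. -/
theorem trace_trWE_mul {nl nw ne : ℕ}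
    (Y : Matrix ((Fin nl × Fin nw) × Fin ne) ((Fin nl × Fin nw) × Fin ne) ℂ)
    (A : Matrix (Fin nl) (Fin nl) ℂ) :
    (trWE Y * A).trace = (Y * ((A ⊗ₖ (1 : Matrix (Fin nw) (Fin nw) ℂ)) ⊗ₖ
      (1 : Matrix (Fin ne) (Fin ne) ℂ))).trace := by
  simp only [Matrix.trace, Matrix.diag, Matrix.mul_apply, trWE, Fintype.sum_prod_type,
    kroneckerMap_apply, Matrix.one_apply, Finset.sum_mul, mul_ite, mul_one, mul_zero,
    Finset.sum_ite_eq', Finset.mem_univ, if_true]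
  refine Finset.sum_congr rfl fun a _ => ?_
  rw [Finset.sum_comm]
  refine Finset.sum_congr rfl fun b _ => ?_
  rw [Finset.sum_comm]

/-- The trace pairing is nondegenerate. -/
theorem eq_of_trace {m : Type*} [Fintype m] [DecidableEq m] {A B : Matrix m m ℂ}
    (h : ∀ X, (A * X).trace = (B * X).trace) : A = B :=
  Matrix.ext_iff_trace_mul_right.2 h

theorem trWE_kronecker {nl nw ne : ℕ} (A : Matrix (Fin nl) (Fin nl) ℂ)
    (B : Matrix (Fin nw) (Fin nw) ℂ) (E : Matrix (Fin ne) (Fin ne) ℂ) :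
    trWE ((A ⊗ₖ B) ⊗ₖ E) = (B.trace * E.trace) • A := by
  refine eq_of_trace fun X => ?_
  simp only [trace_trWE_mul, ← mul_kronecker_mul, trace_kronecker, mul_one, Matrix.smul_mul,
    Matrix.trace_smul, smul_eq_mul]
  ring

theorem kron_sum_smul {ι m n p : Type*} [Fintype ι]
    (A : Matrix m m ℂ) (σ : ι → Matrix n n ℂ) (E : Matrix p p ℂ) (c : ι → ℂ) :
    (A ⊗ₖ (∑ b, c b • σ b)) ⊗ₖ E = ∑ b, c b • ((A ⊗ₖ σ b) ⊗ₖ E) := by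
  ext ⟨⟨a, b⟩, e⟩ ⟨⟨a', b'⟩, e'⟩
  simp only [kroneckerMap_apply, Matrix.sum_apply, Matrix.smul_apply, smul_eq_mul,
    Finset.mul_sum, Finset.sum_mul]
  exact Finset.sum_congr rfl fun b _ => by ring

/-! ### Lindblad generators and commuting observables -/

theorem trace_mul_swap {ι : Type*} [Fintype ι] {A P : Matrix ι ι ℂ}
    (h : A * P = P * A) (Y : Matrix ι ι ℂ) : (A * Y * P).trace = (Y * A * P).trace := by
  rw [Matrix.mul_assoc, Matrix.trace_mul_comm, Matrix.mul_assoc, ← h, ← Matrix.mul_assoc]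

/-- An observable commuting with the Hamiltonian, the noise operators and their adjoints is
conserved: cyclicity of the trace cancels the jump term against the anticommutator. -/
theorem trace_lindblad_mul_eq_zero {ι : Type*} [Fintype ι] {M : ℕ}
    {H P : Matrix ι ι ℂ} {L : Fin M → Matrix ι ι ℂ} (hH : H * P = P * H)
    (hL : ∀ m, L m * P = P * L m) (hL' : ∀ m, (L m)ᴴ * P = P * (L m)ᴴ)
    (Y : Matrix ι ι ℂ) : (lindblad H L Y * P).trace = 0 := by
  have h2 : ∀ m, ((L m)ᴴ * L m) * P = P * ((L m)ᴴ * L m) := fun m => by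
    rw [Matrix.mul_assoc, hL, ← Matrix.mul_assoc, hL', Matrix.mul_assoc]
  have h1 : ∀ m, (L m * Y * (L m)ᴴ * P).trace = (Y * ((L m)ᴴ * L m) * P).trace := fun m => by
    rw [Matrix.mul_assoc (L m), trace_mul_swap (hL m), Matrix.mul_assoc Y]
  simp only [lindblad, Matrix.add_mul, Matrix.sub_mul, Matrix.smul_mul, Matrix.trace_add,
    Matrix.trace_sub, Matrix.trace_smul, Matrix.sum_mul, Matrix.trace_sum, h1,
    trace_mul_swap hH Y, trace_mul_swap (h2 _) Y]
  simp only [smul_eq_mul, sub_self, mul_zero, zero_add]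
  exact Finset.sum_eq_zero fun m _ => by ring

theorem lindblad_commute {ι : Type*} [Fintype ι] [DecidableEq ι] {M : ℕ}
    {H P Y : Matrix ι ι ℂ} {L : Fin M → Matrix ι ι ℂ} (hH : Commute P H)
    (hL : ∀ m, Commute P (L m)) (hL' : ∀ m, Commute P (L m)ᴴ) (hY : Commute P Y) :
    Commute P (lindblad H L Y) := by
  unfold lindblad
  refine Commute.add_right (((hH.mul_right hY).sub_right (hY.mul_right hH)).smul_right _)
    (Commute.sum_right _ _ _ fun m _ => ?_)
  have h2 := (hL' m).mul_right (hL m)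
  exact (((hL m).mul_right hY).mul_right (hL' m)).sub_right
    (((h2.mul_right hY).add_right (hY.mul_right h2)).smul_right _)

/-- Adding `H₁` to the Hamiltonian adds the commutator with `H₁` to the generator. -/
theorem lindblad_add {ι : Type*} [Fintype ι] {M : ℕ} (H₀ H₁ : Matrix ι ι ℂ)
    (L : Fin M → Matrix ι ι ℂ) (X : Matrix ι ι ℂ) :
    lindblad (H₁ + H₀) L X = lindblad H₀ L X + (-Complex.I) • (H₁ * X - X * H₁) := by
  simp only [lindblad, Matrix.add_mul, Matrix.mul_add, smul_sub, smul_add]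
  abel

/-! ### Contributions of the logical–wall coupling -/

/-- The second-order contribution `tr([H₁, [H₁, X]] P)` of a logical–wall coupling `H₁`. The terms
`H₁ X H₁ P` are symmetric under exchanging the two summation indices up to a cyclic rotation, so all
four terms carry the same wall factor `tr(B_a B_i ρ_w)`. -/
theorem trace_double_commutator {ι : Type*} {nl nw ne : ℕ} (S : Finset ι)
    (σ : ι → Matrix (Fin nl) (Fin nl) ℂ) (B : ι → Matrix (Fin nw) (Fin nw) ℂ)
    (ρl : Matrix (Fin nl) (Fin nl) ℂ) (ρw : Matrix (Fin nw) (Fin nw) ℂ)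
    (ρe : Matrix (Fin ne) (Fin ne) ℂ) (hρe : ρe.trace = 1)
    (H₁ X P : Matrix ((Fin nl × Fin nw) × Fin ne) ((Fin nl × Fin nw) × Fin ne) ℂ)
    (hH₁ : H₁ = ∑ i ∈ S, (σ i ⊗ₖ B i) ⊗ₖ (1 : Matrix (Fin ne) (Fin ne) ℂ))
    (hX : X = (ρl ⊗ₖ ρw) ⊗ₖ ρe)
    (hP : P = (ρl ⊗ₖ (1 : Matrix (Fin nw) (Fin nw) ℂ)) ⊗ₖ (1 : Matrix (Fin ne) (Fin ne) ℂ)) :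
    ((H₁ * (H₁ * X - X * H₁) - (H₁ * X - X * H₁) * H₁) * P).trace =
      2 * ∑ a ∈ S, ∑ i ∈ S, (σ a * σ i * (ρl * ρl) - σ a * ρl * σ i * ρl).trace *
        (B a * B i * ρw).trace := by
  have e1 : (H₁ * H₁ * X * P).trace = ∑ a ∈ S, ∑ i ∈ S,
      (σ a * σ i * (ρl * ρl)).trace * (B a * B i * ρw).trace := by
    simp only [hH₁, hX, hP, Finset.sum_mul, Finset.mul_sum, Matrix.trace_sum, mul_one, one_mul,
      ← mul_kronecker_mul, trace_kronecker, hρe, Matrix.mul_assoc]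
    rw [Finset.sum_comm]
  have e2 : (H₁ * X * H₁ * P).trace = ∑ a ∈ S, ∑ i ∈ S,
      (σ a * ρl * σ i * ρl).trace * (B a * B i * ρw).trace := by
    simp only [hH₁, hX, hP, Finset.sum_mul, Finset.mul_sum, Matrix.trace_sum, mul_one, one_mul,
      ← mul_kronecker_mul, trace_kronecker, hρe]
    refine Finset.sum_congr rfl fun a _ => Finset.sum_congr rfl fun i _ => ?_
    rw [Matrix.mul_assoc (σ i * ρl), Matrix.trace_mul_comm, ← Matrix.mul_assoc,
      Matrix.trace_mul_comm (B i * ρw), ← Matrix.mul_assoc]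
  have e3 : (X * H₁ * H₁ * P).trace = ∑ a ∈ S, ∑ i ∈ S,
      (σ a * σ i * (ρl * ρl)).trace * (B a * B i * ρw).trace := by
    simp only [hH₁, hX, hP, Finset.sum_mul, Finset.mul_sum, Matrix.trace_sum, mul_one,
      ← mul_kronecker_mul, trace_kronecker, hρe]
    rw [Finset.sum_comm]
    refine Finset.sum_congr rfl fun a _ => Finset.sum_congr rfl fun i _ => ?_
    rw [Matrix.mul_assoc ρl, Matrix.mul_assoc ρl, Matrix.trace_mul_comm, Matrix.mul_assoc ρw,
      Matrix.trace_mul_comm ρw, Matrix.mul_assoc (σ a * σ i)]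
  have e : (H₁ * (H₁ * X - X * H₁) - (H₁ * X - X * H₁) * H₁) * P =
      H₁ * H₁ * X * P - (2 : ℂ) • (H₁ * X * H₁ * P) + X * H₁ * H₁ * P := by
    rw [two_smul]; noncomm_ring
  rw [e, Matrix.trace_add, Matrix.trace_sub, Matrix.trace_smul, e1, e2, e3]
  simp only [Matrix.trace_sub, sub_mul, Finset.sum_sub_distrib, smul_eq_mul]
  ring

theorem trWE_commutator {ι : Type*} {nl nw ne : ℕ} (S : Finset ι)
    (σ : ι → Matrix (Fin nl) (Fin nl) ℂ) (B : ι → Matrix (Fin nw) (Fin nw) ℂ)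
    (ρl : Matrix (Fin nl) (Fin nl) ℂ) (ρw : Matrix (Fin nw) (Fin nw) ℂ)
    (ρe : Matrix (Fin ne) (Fin ne) ℂ) (hρe : ρe.trace = 1)
    (H₁ X : Matrix ((Fin nl × Fin nw) × Fin ne) ((Fin nl × Fin nw) × Fin ne) ℂ)
    (hH₁ : H₁ = ∑ i ∈ S, (σ i ⊗ₖ B i) ⊗ₖ (1 : Matrix (Fin ne) (Fin ne) ℂ))
    (hX : X = (ρl ⊗ₖ ρw) ⊗ₖ ρe) :
    trWE (H₁ * X - X * H₁) = ∑ i ∈ S, (B i * ρw).trace • (σ i * ρl - ρl * σ i) := by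
  refine eq_of_trace fun A => ?_
  rw [trace_trWE_mul]
  simp only [hH₁, hX, Matrix.sub_mul, Finset.sum_mul, Finset.mul_sum, Matrix.trace_sum,
    Matrix.trace_sub, mul_one, one_mul, ← mul_kronecker_mul, trace_kronecker, hρe,
    Matrix.smul_mul, Matrix.trace_smul, smul_eq_mul, ← Finset.sum_sub_distrib]
  refine Finset.sum_congr rfl fun i _ => ?_
  rw [Matrix.trace_mul_comm ρw]
  ring

/-- The term `tr(σ_i σ_a ρ²)` in `tr([σ_a, ρ][σ_i, ρ])` is exchanged with `tr(σ_a σ_i ρ²)` by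
relabelling, since the weight `β_a β_i` is symmetric. -/
theorem trace_commutator_sq {ι m : Type*} [Fintype m] (S : Finset ι)
    (σ : ι → Matrix m m ℂ) (β : ι → ℂ) (ρ : Matrix m m ℂ) :
    ((∑ i ∈ S, β i • (σ i * ρ - ρ * σ i)) * (∑ i ∈ S, β i • (σ i * ρ - ρ * σ i))).trace =
      -(2 * ∑ a ∈ S, ∑ i ∈ S, (σ a * σ i * (ρ * ρ) - σ a * ρ * σ i * ρ).trace *
        (β a * β i)) := by
  have e : ∀ a i, ((σ a * ρ - ρ * σ a) * (σ i * ρ - ρ * σ i)).trace =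
      2 * (σ a * ρ * σ i * ρ).trace - (σ a * σ i * (ρ * ρ)).trace
        - (σ i * σ a * (ρ * ρ)).trace := by
    intro a i
    have h1 : (ρ * σ a * (ρ * σ i)).trace = (σ a * ρ * σ i * ρ).trace := by
      rw [Matrix.mul_assoc ρ, Matrix.trace_mul_comm]
      simp only [Matrix.mul_assoc]
    have h2 : (ρ * σ a * (σ i * ρ)).trace = (σ a * σ i * (ρ * ρ)).trace := by
      rw [Matrix.mul_assoc ρ, Matrix.trace_mul_comm]
      simp only [Matrix.mul_assoc]
    have h3 : (σ a * ρ * (ρ * σ i)).trace = (σ i * σ a * (ρ * ρ)).trace := by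
      rw [← Matrix.mul_assoc, Matrix.trace_mul_comm]
      simp only [Matrix.mul_assoc]
    rw [Matrix.sub_mul, Matrix.mul_sub, Matrix.mul_sub, Matrix.trace_sub, Matrix.trace_sub,
      Matrix.trace_sub, h1, h2, h3, ← Matrix.mul_assoc]
    ring
  have hs : ∑ a ∈ S, ∑ i ∈ S, β i * (β a * (σ a * σ i * (ρ * ρ)).trace) =
      ∑ a ∈ S, ∑ i ∈ S, β i * (β a * (σ i * σ a * (ρ * ρ)).trace) := by
    rw [Finset.sum_comm]
    exact Finset.sum_congr rfl fun a _ => Finset.sum_congr rfl fun i _ => by ring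
  simp only [Finset.sum_mul, Finset.mul_sum, Matrix.trace_sum, Matrix.smul_mul, Matrix.mul_smul,
    Matrix.trace_smul, smul_eq_mul, e]
  rw [Finset.sum_comm]
  rw [← sub_eq_zero, sub_neg_eq_add]
  rw [← sub_eq_zero] at hs
  simp only [← Finset.sum_add_distrib, ← Finset.sum_sub_distrib] at hs ⊢
  rw [← hs]
  refine Finset.sum_congr rfl fun a _ => Finset.sum_congr rfl fun i _ => ?_
  rw [Matrix.trace_sub]
  ring

/-- Bilinear expansion of the covariance `tr(A B ρ) − tr(A ρ) tr(B ρ)`: the terms in which one of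
the two matrices is scalar vanish, because `tr ρ = 1`. -/
theorem covariance_expand {κ m : Type*} [Fintype m] [DecidableEq m] [Fintype κ] (T : Finset κ)
    (τ : κ → Matrix m m ℂ) (ρ : Matrix m m ℂ) (hρ : ρ.trace = 1) (hT : ∀ b ∉ T, ∃ c : ℂ, τ b = c • 1)
    (x y : κ → ℂ) (A B : Matrix m m ℂ) (hA : A = ∑ b, x b • τ b) (hB : B = ∑ b, y b • τ b) :
    (A * B * ρ).trace - (A * ρ).trace * (B * ρ).trace = ∑ b ∈ T, ∑ j ∈ T, x b * y j *
      ((τ b * τ j * ρ).trace - (τ b * ρ).trace * (τ j * ρ).trace) := by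
  have hz1 : ∀ b ∉ T, ∀ j,
      (τ b * τ j * ρ).trace - (τ b * ρ).trace * (τ j * ρ).trace = 0 := by
    intro b hb j
    obtain ⟨c, hc⟩ := hT b hb
    simp [hc, hρ]
  have hz2 : ∀ j ∉ T, ∀ b,
      (τ b * τ j * ρ).trace - (τ b * ρ).trace * (τ j * ρ).trace = 0 := by
    intro b hb j
    obtain ⟨c, hc⟩ := hT b hb
    simp [hc, hρ, mul_comm]
  have e : (A * B * ρ).trace - (A * ρ).trace * (B * ρ).trace = ∑ b, ∑ j, x b * y j *
      ((τ b * τ j * ρ).trace - (τ b * ρ).trace * (τ j * ρ).trace) := by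
    have e1 : (A * B * ρ).trace = ∑ b, ∑ j, x b * y j * (τ b * τ j * ρ).trace := by
      simp only [hA, hB, Matrix.trace_sum, Matrix.smul_mul, Matrix.mul_smul, Matrix.trace_smul,
        smul_eq_mul, Finset.sum_mul, Finset.mul_sum]
      rw [Finset.sum_comm]
      exact Finset.sum_congr rfl fun b _ => Finset.sum_congr rfl fun j _ => by ring
    have e2 : (A * ρ).trace * (B * ρ).trace =
        ∑ b, ∑ j, x b * y j * ((τ b * ρ).trace * (τ j * ρ).trace) := by
      simp only [hA, hB, Matrix.trace_sum, Matrix.smul_mul, Matrix.trace_smul,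
        smul_eq_mul, Matrix.sum_mul]
      rw [Finset.sum_mul_sum]
      exact Finset.sum_congr rfl fun b _ => Finset.sum_congr rfl fun j _ => by ring
    rw [e1, e2]
    simp only [← Finset.sum_sub_distrib, mul_sub]
  rw [e, ← Finset.sum_subset (Finset.subset_univ T)]
  · refine Finset.sum_congr rfl fun b _ => ?_
    rw [← Finset.sum_subset (Finset.subset_univ T)]
    intro j _ hj
    rw [hz2 j hj, mul_zero]
  · intro b _ hb
    exact Finset.sum_eq_zero fun j _ => by rw [hz1 b hb, mul_zero]

/-! ### Splitting the Hamiltonian -/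

/-- **Initial purity acceleration without direct logical–environment coupling.**
If the Hamiltonian has no component coupling the logical subsystem directly to
the environment (`g_{ijk} = 0` whenever `i ≥ 1` and `k ≥ 1`), then for every
factorized initial state the initial purity acceleration is
`−(4/n_e) Σ_{a,b,i,j ≥ 1} g_{ab0} g_{ij0} tr(σ_a σ_i ρ_l² − σ_a ρ_l σ_i ρ_l)
(tr(σ_b σ_j ρ_w) − tr(σ_b ρ_w) tr(σ_j ρ_w))`. -/
theorem purity_acceleration_no_le_coupling
    {nl nw ne M : ℕ} (hnl : 0 < nl) (hnw : 0 < nw) (hne : 0 < ne)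
    (σl : Fin (nl * nl) → Matrix (Fin nl) (Fin nl) ℂ)
    (σw : Fin (nw * nw) → Matrix (Fin nw) (Fin nw) ℂ)
    (σe : Fin (ne * ne) → Matrix (Fin ne) (Fin ne) ℂ)
    (hσlH : ∀ i, (σl i).IsHermitian) (hσwH : ∀ i, (σw i).IsHermitian)
    (hσeH : ∀ i, (σe i).IsHermitian)
    (hσl0 : σl ⟨0, Nat.mul_pos hnl hnl⟩ = ((1 / Real.sqrt nl : ℝ) : ℂ) • 1)
    (hσw0 : σw ⟨0, Nat.mul_pos hnw hnw⟩ = ((1 / Real.sqrt nw : ℝ) : ℂ) • 1)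
    (hσe0 : σe ⟨0, Nat.mul_pos hne hne⟩ = ((1 / Real.sqrt ne : ℝ) : ℂ) • 1)
    (hσlON : ∀ i j, (σl i * σl j).trace = if i = j then 1 else 0)
    (hσwON : ∀ i j, (σw i * σw j).trace = if i = j then 1 else 0)
    (hσeON : ∀ i j, (σe i * σe j).trace = if i = j then 1 else 0)
    (H : Matrix ((Fin nl × Fin nw) × Fin ne) ((Fin nl × Fin nw) × Fin ne) ℂ)
    (hH : H.IsHermitian)
    (g : Fin (nl * nl) → Fin (nw * nw) → Fin (ne * ne) → ℂ)
    (hg : ∀ i j k, g i j k = (((σl i ⊗ₖ σw j) ⊗ₖ σe k) * H).trace)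
    (hΔ : ∀ (i : Fin (nl * nl)) (j : Fin (nw * nw)) (k : Fin (ne * ne)),
      1 ≤ (i : ℕ) → 1 ≤ (k : ℕ) → g i j k = 0)
    (Le : Fin M → Matrix (Fin ne) (Fin ne) ℂ)
    (ρl : Matrix (Fin nl) (Fin nl) ℂ) (ρw : Matrix (Fin nw) (Fin nw) ℂ)
    (ρe : Matrix (Fin ne) (Fin ne) ℂ)
    (hρl : IsDensity ρl) (hρw : IsDensity ρw) (hρe : IsDensity ρe) :
    (2 : ℂ) *
      ((trWE (lindblad H
          (fun m => ((1 : Matrix (Fin nl) (Fin nl) ℂ) ⊗ₖ (1 : Matrix (Fin nw) (Fin nw) ℂ)) ⊗ₖ Le m)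
          (lindblad H
            (fun m => ((1 : Matrix (Fin nl) (Fin nl) ℂ) ⊗ₖ (1 : Matrix (Fin nw) (Fin nw) ℂ)) ⊗ₖ Le m)
            ((ρl ⊗ₖ ρw) ⊗ₖ ρe)))
        * trWE ((ρl ⊗ₖ ρw) ⊗ₖ ρe)).trace
      + (trWE (lindblad H
          (fun m => ((1 : Matrix (Fin nl) (Fin nl) ℂ) ⊗ₖ (1 : Matrix (Fin nw) (Fin nw) ℂ)) ⊗ₖ Le m)
          ((ρl ⊗ₖ ρw) ⊗ₖ ρe))
        * trWE (lindblad H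
          (fun m => ((1 : Matrix (Fin nl) (Fin nl) ℂ) ⊗ₖ (1 : Matrix (Fin nw) (Fin nw) ℂ)) ⊗ₖ Le m)
          ((ρl ⊗ₖ ρw) ⊗ₖ ρe))).trace)
    = -(4 / (ne : ℂ)) *
      ∑ a ∈ Finset.univ.filter (fun a : Fin (nl * nl) => 1 ≤ (a : ℕ)),
      ∑ b ∈ Finset.univ.filter (fun b : Fin (nw * nw) => 1 ≤ (b : ℕ)),
      ∑ i ∈ Finset.univ.filter (fun i : Fin (nl * nl) => 1 ≤ (i : ℕ)),
      ∑ j ∈ Finset.univ.filter (fun j : Fin (nw * nw) => 1 ≤ (j : ℕ)),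
        g a b ⟨0, Nat.mul_pos hne hne⟩ * g i j ⟨0, Nat.mul_pos hne hne⟩ *
          (σl a * σl i * (ρl * ρl) - σl a * ρl * σl i * ρl).trace *
          ((σw b * σw j * ρw).trace - (σw b * ρw).trace * (σw j * ρw).trace) := by
  set z : Fin (ne * ne) := ⟨0, Nat.mul_pos hne hne⟩ with hz
  set S := Finset.univ.filter (fun a : Fin (nl * nl) => 1 ≤ (a : ℕ)) with hS
  set T := Finset.univ.filter (fun a : Fin (nw * nw) => 1 ≤ (a : ℕ)) with hT
  -- `r` is the scalar by which `σ_0^e` acts.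
  set r : ℂ := ((1 / Real.sqrt ne : ℝ) : ℂ) with hr
  have hr2 : r * r = 1 / (ne : ℂ) := by
    rw [hr, ← Complex.ofReal_mul, div_mul_div_comm, Real.mul_self_sqrt (Nat.cast_nonneg ne)]
    push_cast
    ring
  set B : Fin (nl * nl) → Matrix (Fin nw) (Fin nw) ℂ := fun a => ∑ b, (g a b z * r) • σw b with hB
  set H₁ := ∑ a ∈ S, (σl a ⊗ₖ B a) ⊗ₖ (1 : Matrix (Fin ne) (Fin ne) ℂ) with hH₁
  set G : Fin (nl * nl) → Matrix ((Fin nl × Fin nw) × Fin ne) ((Fin nl × Fin nw) × Fin ne) ℂ :=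
    fun i => ∑ j, ∑ k, g i j k • ((σl i ⊗ₖ σw j) ⊗ₖ σe k) with hG
  have hexp : H = ∑ i, G i := by
    have h := expand_of_orthonormal (ι := (Fin (nl * nl) × Fin (nw * nw)) × Fin (ne * ne))
      (by simp only [Fintype.card_prod, Fintype.card_fin]; ring)
      (fun p => (σl p.1.1 ⊗ₖ σw p.1.2) ⊗ₖ σe p.2) (by
        rintro ⟨⟨i, j⟩, k⟩ ⟨⟨i', j'⟩, k'⟩
        simp only [← mul_kronecker_mul, trace_kronecker, hσlON, hσwON, hσeON, Prod.mk.injEq]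
        by_cases h1 : i = i' <;> by_cases h2 : j = j' <;> by_cases h3 : k = k' <;>
          simp [h1, h2, h3]) H
    simp only [← hg, Fintype.sum_prod_type] at h
    exact h
  have hGS : ∀ i ∈ S, G i = (σl i ⊗ₖ B i) ⊗ₖ (1 : Matrix (Fin ne) (Fin ne) ℂ) := by
    intro i hi
    have hi1 : 1 ≤ (i : ℕ) := by simpa [hS] using hi
    simp only [hG, hB, kron_sum_smul]
    refine Finset.sum_congr rfl fun j _ => ?_
    rw [Finset.sum_eq_single z]
    · rw [hσe0, kronecker_smul, smul_smul]
    · intro k _ hk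
      have hk1 : 1 ≤ (k : ℕ) := by
        rcases Nat.eq_zero_or_pos (k : ℕ) with h | h
        · exact absurd (Fin.ext h) hk
        · exact h
      rw [hΔ i j k hi1 hk1, zero_smul]
    · simp
  obtain ⟨H₀, hH₀⟩ : ∃ H₀, H₀ = ∑ i ∈ Sᶜ, G i := ⟨_, rfl⟩
  have hsplit : H = H₁ + H₀ := by
    rw [hexp, hH₀, hH₁, ← Finset.sum_congr rfl hGS, Finset.sum_add_sum_compl]
  have hcomm : ∀ (A : Matrix (Fin nl) (Fin nl) ℂ) (C : Matrix (Fin nw) (Fin nw) ℂ)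
      (E : Matrix (Fin ne) (Fin ne) ℂ),
      Commute ((A ⊗ₖ (1 : Matrix (Fin nw) (Fin nw) ℂ)) ⊗ₖ (1 : Matrix (Fin ne) (Fin ne) ℂ))
        (((1 : Matrix (Fin nl) (Fin nl) ℂ) ⊗ₖ C) ⊗ₖ E) := by
    intro A C E
    simp only [Commute, SemiconjBy, ← mul_kronecker_mul, mul_one, one_mul]
  have hcH₀ : ∀ A : Matrix (Fin nl) (Fin nl) ℂ,
      Commute ((A ⊗ₖ (1 : Matrix (Fin nw) (Fin nw) ℂ)) ⊗ₖ (1 : Matrix (Fin ne) (Fin ne) ℂ))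
        H₀ := by
    intro A
    rw [hH₀]
    refine Commute.sum_right _ _ _ fun i hi => Commute.sum_right _ _ _ fun j _ =>
      Commute.sum_right _ _ _ fun k _ => Commute.smul_right ?_ _
    have hi0 : i = ⟨0, Nat.mul_pos hnl hnl⟩ := by
      apply Fin.ext
      simpa [hS] using hi
    rw [hi0, hσl0, smul_kronecker, smul_kronecker]
    exact (hcomm _ _ _).smul_right _
  set L := fun m => ((1 : Matrix (Fin nl) (Fin nl) ℂ) ⊗ₖ (1 : Matrix (Fin nw) (Fin nw) ℂ)) ⊗ₖ Le m
    with hL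
  have hL' : ∀ m, (L m)ᴴ =
      ((1 : Matrix (Fin nl) (Fin nl) ℂ) ⊗ₖ (1 : Matrix (Fin nw) (Fin nw) ℂ)) ⊗ₖ (Le m)ᴴ := by
    intro m
    simp only [hL, conjTranspose_kronecker, conjTranspose_one]
  have htr0 : ∀ (A : Matrix (Fin nl) (Fin nl) ℂ) Y, (lindblad H₀ L Y *
      ((A ⊗ₖ (1 : Matrix (Fin nw) (Fin nw) ℂ)) ⊗ₖ (1 : Matrix (Fin ne) (Fin ne) ℂ))).trace = 0 :=
    fun A Y => trace_lindblad_mul_eq_zero (hcH₀ A).eq.symm (fun m => (hcomm A 1 (Le m)).eq.symm)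
      (fun m => by rw [hL']; exact (hcomm A 1 _).eq.symm) Y
  set X := (ρl ⊗ₖ ρw) ⊗ₖ ρe with hX
  obtain ⟨P, hP⟩ : ∃ P, P = (ρl ⊗ₖ (1 : Matrix (Fin nw) (Fin nw) ℂ)) ⊗ₖ
    (1 : Matrix (Fin ne) (Fin ne) ℂ) := ⟨_, rfl⟩
  have hPX : Commute P X := by
    simp only [hP, hX, Commute, SemiconjBy, ← mul_kronecker_mul, mul_one, one_mul]
  have hPlX : Commute P (lindblad H₀ L X) :=
    lindblad_commute (hP ▸ hcH₀ ρl) (fun m => hP ▸ hcomm ρl 1 (Le m))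
      (fun m => by rw [hL', hP]; exact hcomm ρl 1 _) hPX
  have htrX : trWE X = ρl := by
    rw [hX, trWE_kronecker, hρw.2, hρe.2, mul_one, one_smul]
  have hfirst : trWE (lindblad H L X) =
      (-Complex.I) • ∑ i ∈ S, (B i * ρw).trace • (σl i * ρl - ρl * σl i) := by
    rw [← trWE_commutator S σl B ρl ρw ρe hρe.2 H₁ X hH₁ hX, hsplit, lindblad_add]
    refine eq_of_trace fun A => ?_
    rw [trace_trWE_mul, Matrix.add_mul, Matrix.trace_add, htr0, zero_add, Matrix.smul_mul,
      Matrix.trace_smul, ← trace_trWE_mul, Matrix.smul_mul, Matrix.trace_smul]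
  have hsecond : (trWE (lindblad H L (lindblad H L X)) * ρl).trace =
      -(2 * ∑ a ∈ S, ∑ i ∈ S, (σl a * σl i * (ρl * ρl) - σl a * ρl * σl i * ρl).trace *
        (B a * B i * ρw).trace) := by
    rw [← trace_double_commutator S σl B ρl ρw ρe hρe.2 H₁ X P hH₁ hX hP, trace_trWE_mul, hsplit,
      lindblad_add, Matrix.add_mul, Matrix.trace_add, htr0, zero_add, ← hP, lindblad_add]
    -- The mixed term vanishes because `𝓛₀(ρ₀)` commutes with `P`.
    have h0 : ((H₁ * lindblad H₀ L X - lindblad H₀ L X * H₁) * P).trace = 0 := by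
      rw [Matrix.sub_mul, Matrix.trace_sub, trace_mul_swap hPlX.eq.symm, sub_self]
    have hd : ∀ Y Z : Matrix ((Fin nl × Fin nw) × Fin ne) ((Fin nl × Fin nw) × Fin ne) ℂ,
        ((-Complex.I) • (H₁ * (Y + (-Complex.I) • Z) - (Y + (-Complex.I) • Z) * H₁) * P).trace =
        (-Complex.I) * ((H₁ * Y - Y * H₁) * P).trace - ((H₁ * Z - Z * H₁) * P).trace := by
      intro Y Z
      simp only [Matrix.mul_add, Matrix.add_mul, Matrix.sub_mul, Matrix.smul_mul, Matrix.mul_smul,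
        Matrix.trace_add, Matrix.trace_sub, Matrix.trace_smul, smul_eq_mul]
      linear_combination ((H₁ * Z * P).trace - (Z * H₁ * P).trace) * Complex.I_mul_I
    rw [hd, h0]
    ring
  have hcov : ∀ a i, (B a * B i * ρw).trace - (B a * ρw).trace * (B i * ρw).trace =
      ∑ b ∈ T, ∑ j ∈ T, (g a b z * r) * (g i j z * r) *
        ((σw b * σw j * ρw).trace - (σw b * ρw).trace * (σw j * ρw).trace) := fun a i =>
    covariance_expand T σw ρw hρw.2 (fun b hb => by
      have hb0 : b = ⟨0, Nat.mul_pos hnw hnw⟩ := by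
        apply Fin.ext
        simpa [hT] using hb
      exact ⟨_, hb0 ▸ hσw0⟩) _ _ _ _ rfl rfl
  rw [htrX, hsecond, hfirst, Matrix.smul_mul, Matrix.mul_smul, Matrix.trace_smul, Matrix.trace_smul,
    trace_commutator_sq, smul_eq_mul, smul_eq_mul]
  calc _ = -4 * ∑ a ∈ S, ∑ i ∈ S, (σl a * σl i * (ρl * ρl) - σl a * ρl * σl i * ρl).trace *
        ((B a * B i * ρw).trace - (B a * ρw).trace * (B i * ρw).trace) := by
        simp only [mul_sub, Finset.sum_sub_distrib]
        linear_combination (-4 * ∑ a ∈ S, ∑ i ∈ S,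
          (σl a * σl i * (ρl * ρl) - σl a * ρl * σl i * ρl).trace *
            ((B a * ρw).trace * (B i * ρw).trace)) * Complex.I_mul_I
    _ = _ := by
        simp only [hcov, Finset.mul_sum]
        refine Finset.sum_congr rfl fun a _ => ?_
        rw [Finset.sum_comm]
        refine Finset.sum_congr rfl fun b _ => Finset.sum_congr rfl fun i _ =>
          Finset.sum_congr rfl fun j _ => ?_
        linear_combination (-4 * g a b z * g i j z *
          (σl a * σl i * (ρl * ρl) - σl a * ρl * σl i * ρl).trace *
          ((σw b * σw j * ρw).trace - (σw b * ρw).trace * (σw j * ρw).trace)) * hr2
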